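/- Under the hypotheses of the policy improvement theorem (policies π, π̂ : X × ℝ^k → ℝ^k each γ-Lipschitz in the action component with γ ∈ (0,1); ℓ : ℝ^k → ℝ convex and L-Lipschitz; roll-outs a_t = π(x_t, a_{t−1}) and a'_t = π'(x_t, a'_{t−1}) from common initial action a₀ where π' = β·π̂ + (1−β)·π; and ε ≥ 0 with ‖π̂(x_t, a_{t−1}) − π(x_t, a_{t−1})‖ ≤ ε for all t), define Δ = (1/T)·Σ_{t=1}^T ℓ(a_t) − (1/T)·Σ_{t=1}^T ℓ(π̂(x_t, a_{t−1})) and δ = γ·ε·L / (1−γ). If Δ > δ and the step size is chosen as β = (Δ − δ)/(2Δ), then (1/T)·Σ_{t=1}^T ℓ(a'_t) − (1/T)·Σ_{t=1}^T ℓ(a_t) ≤ −(Δ − δ)² / (2·(Δ + δ)), i.e. the interpolated policy strictly improves. -/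

import Mathlib

/-!
Along the states visited by `π`, the mixture `π'` differs from `π` by at most `β ε`. Since `π'` is
again `γ`-Lipschitz in the action, these errors are damped geometrically, so its roll-out stays
within `β ε / (1 - γ)` of that of `π`. Replacing `π' (xₜ, a'ₜ₋₁)` by `π' (xₜ, aₜ₋₁)` therefore costs
at most `L γ β ε / (1 - γ) = β δ` per step, and by convexity the loss of the latter is at most the
`β`-mixture of the losses of `π̂` and `π` at `(xₜ, aₜ₋₁)`. Averaging over time, the mixture gains at
least `β (Δ - δ)`, whatever `β ∈ [0, 1]` is.
-/

open Finset

section Definitions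

variable {X E : Type*}

/-- Stability Condition 2: for each fixed context, the policy `π` is `γ`-Lipschitz in the previous
action. The constant is real rather than in `ℝ≥0`, so that it can be used directly in bounds. -/
def ActionLipschitz [SeminormedAddCommGroup E] (γ : ℝ) (π : X × E → E) : Prop :=
  ∀ (x : X) (a a' : E), ‖π (x, a) - π (x, a')‖ ≤ γ * ‖a - a'‖

/-- The sequence `a` is the roll-out of the policy `π` on the contexts `x` from the initial action
`a 0`. Contexts are indexed from `1`, so `x 0` is a junk value. -/
def IsRollout (π : X × E → E) (x : ℕ → X) (a : ℕ → E) : Prop :=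
  ∀ t : ℕ, a (t + 1) = π (x (t + 1), a t)

/-- The average of the loss `ℓ` over the actions `a 1, …, a T`; for a roll-out `a` this is its
trajectory loss. -/
noncomputable def averageLoss (ℓ : E → ℝ) (T : ℕ) (a : ℕ → E) : ℝ :=
  (1 / T : ℝ) * ∑ t ∈ Icc 1 T, ℓ (a t)

end Definitions

theorem averageLoss_le_of_forall_le_combination {E : Type*} {ℓ : E → ℝ} {T : ℕ} (hT : 1 ≤ T)
    {a b c : ℕ → E} {p q r : ℝ}
    (h : ∀ t ∈ Icc 1 T, ℓ (a t) ≤ p * ℓ (b t) + q * ℓ (c t) + r) :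
    averageLoss ℓ T a ≤ p * averageLoss ℓ T b + q * averageLoss ℓ T c + r := by
  have hT0 : (T : ℝ) ≠ 0 := by positivity
  calc averageLoss ℓ T a
      ≤ (1 / T : ℝ) * ∑ t ∈ Icc 1 T, (p * ℓ (b t) + q * ℓ (c t) + r) :=
        mul_le_mul_of_nonneg_left (sum_le_sum h) (by positivity)
    _ = p * averageLoss ℓ T b + q * averageLoss ℓ T c + r := by
        simp only [averageLoss, sum_add_distrib, ← mul_sum, sum_const, Nat.card_Icc,
          Nat.add_sub_cancel, nsmul_eq_mul]
        field_simp

theorem stability_penalty_nonneg {γ ε L : ℝ} (hγ : γ ∈ Set.Ico (0 : ℝ) 1) (hε : 0 ≤ ε)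
    (hL : 0 ≤ L) : 0 ≤ γ * ε * L / (1 - γ) :=
  div_nonneg (mul_nonneg (mul_nonneg hγ.1 hε) hL) (sub_nonneg.2 hγ.2.le)

section Policies

variable {X E : Type*} [SeminormedAddCommGroup E] {γ : ℝ} {x : ℕ → X} {a b : ℕ → E} {T : ℕ}

theorem ActionLipschitz.norm_rollout_sub_le {π : X × E → E} (hπ : ActionLipschitz γ π)
    (hγ : γ ∈ Set.Ico (0 : ℝ) 1) (hb : IsRollout π x b) (h0 : b 0 = a 0) {η : ℝ} (hη : 0 ≤ η)
    (hdefect : ∀ t < T, ‖π (x (t + 1), a t) - a (t + 1)‖ ≤ η) :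
    ∀ t ≤ T, ‖b t - a t‖ ≤ η / (1 - γ) := by
  have hγ' : 0 < 1 - γ := sub_pos.2 hγ.2
  intro t ht
  induction t with
  | zero => rw [h0, sub_self, norm_zero]; positivity
  | succ t ih =>
    calc ‖b (t + 1) - a (t + 1)‖
        ≤ ‖π (x (t + 1), b t) - π (x (t + 1), a t)‖ + ‖π (x (t + 1), a t) - a (t + 1)‖ := by
          rw [hb t]; exact norm_sub_le_norm_sub_add_norm_sub _ _ _
      _ ≤ γ * ‖b t - a t‖ + η := add_le_add (hπ _ _ _) (hdefect t ht)
      _ ≤ γ * (η / (1 - γ)) + η := by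
          gcongr
          exacts [hγ.1, ih (Nat.le_of_succ_le ht)]
      _ = η / (1 - γ) := by field_simp; ring

variable [NormedSpace ℝ E]

theorem convex_setOf_actionLipschitz (γ : ℝ) :
    Convex ℝ {π : X × E → E | ActionLipschitz γ π} := by
  intro π hπ ρ hρ p q hp hq hpq y u v
  calc ‖(p • π + q • ρ) (y, u) - (p • π + q • ρ) (y, v)‖
      = ‖p • (π (y, u) - π (y, v)) + q • (ρ (y, u) - ρ (y, v))‖ := by
        simp only [Pi.add_apply, Pi.smul_apply]; congr 1; module
    _ ≤ p * ‖π (y, u) - π (y, v)‖ + q * ‖ρ (y, u) - ρ (y, v)‖ := by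
        rw [← norm_smul_of_nonneg hp, ← norm_smul_of_nonneg hq]; exact norm_add_le _ _
    _ ≤ p * (γ * ‖u - v‖) + q * (γ * ‖u - v‖) := by
        gcongr
        exacts [hπ y u v, hρ y u v]
    _ = γ * ‖u - v‖ := by rw [← add_mul, hpq, one_mul]

variable {π πhat : X × E → E} {ℓ : E → ℝ} {L ε β : ℝ} {a' : ℕ → E}

theorem norm_rollout_mixture_sub_rollout_le (hγ : γ ∈ Set.Ico (0 : ℝ) 1)
    (hπ : ActionLipschitz γ π) (hπhat : ActionLipschitz γ πhat) (hβ : β ∈ Set.Icc (0 : ℝ) 1)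
    (ha : IsRollout π x a) (ha' : IsRollout (β • πhat + (1 - β) • π) x a') (h0 : a' 0 = a 0)
    (hε : 0 ≤ ε)
    (hclose : ∀ t < T, ‖πhat (x (t + 1), a t) - π (x (t + 1), a t)‖ ≤ ε) :
    ∀ t ≤ T, ‖a' t - a t‖ ≤ β * ε / (1 - γ) := by
  have hmix : ActionLipschitz γ (β • πhat + (1 - β) • π) :=
    convex_setOf_actionLipschitz γ hπhat hπ hβ.1 (sub_nonneg.2 hβ.2) (add_sub_cancel _ _)
  refine hmix.norm_rollout_sub_le hγ ha' h0 (mul_nonneg hβ.1 hε) fun t ht ↦ ?_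
  calc ‖(β • πhat + (1 - β) • π) (x (t + 1), a t) - a (t + 1)‖
      = ‖β • (πhat (x (t + 1), a t) - π (x (t + 1), a t))‖ := by
        rw [ha t, Pi.add_apply, Pi.smul_apply, Pi.smul_apply]; congr 1; module
    _ ≤ β * ε := by
        rw [norm_smul_of_nonneg hβ.1]
        exact mul_le_mul_of_nonneg_left (hclose t ht) hβ.1

theorem loss_rollout_mixture_le (hγ : γ ∈ Set.Ico (0 : ℝ) 1)
    (hπ : ActionLipschitz γ π) (hπhat : ActionLipschitz γ πhat)
    (hconv : ConvexOn ℝ Set.univ ℓ) (hL : 0 ≤ L) (hlip : ∀ u v : E, |ℓ u - ℓ v| ≤ L * ‖u - v‖)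
    (hβ : β ∈ Set.Icc (0 : ℝ) 1)
    (ha : IsRollout π x a) (ha' : IsRollout (β • πhat + (1 - β) • π) x a') (h0 : a' 0 = a 0)
    (hε : 0 ≤ ε)
    (hclose : ∀ t < T, ‖πhat (x (t + 1), a t) - π (x (t + 1), a t)‖ ≤ ε) {t : ℕ} (ht : t < T) :
    ℓ (a' (t + 1)) ≤ β * ℓ (πhat (x (t + 1), a t)) + (1 - β) * ℓ (a (t + 1))
      + β * (γ * ε * L / (1 - γ)) := by
  set π' := β • πhat + (1 - β) • π
  have hβ' : 0 ≤ 1 - β := sub_nonneg.2 hβ.2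
  have hmix : ActionLipschitz γ π' :=
    convex_setOf_actionLipschitz γ hπhat hπ hβ.1 hβ' (add_sub_cancel _ _)
  have hconvex : ℓ (π' (x (t + 1), a t))
      ≤ β * ℓ (πhat (x (t + 1), a t)) + (1 - β) * ℓ (a (t + 1)) := by
    rw [ha t]
    exact hconv.2 (Set.mem_univ _) (Set.mem_univ _) hβ.1 hβ' (add_sub_cancel _ _)
  have hdrift : ℓ (a' (t + 1)) - ℓ (π' (x (t + 1), a t)) ≤ β * (γ * ε * L / (1 - γ)) :=
    calc ℓ (a' (t + 1)) - ℓ (π' (x (t + 1), a t))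
        ≤ L * ‖π' (x (t + 1), a' t) - π' (x (t + 1), a t)‖ := by
          rw [ha' t]; exact (le_abs_self _).trans (hlip _ _)
      _ ≤ L * (γ * ‖a' t - a t‖) := mul_le_mul_of_nonneg_left (hmix _ _ _) hL
      _ ≤ L * (γ * (β * ε / (1 - γ))) := by
          gcongr
          exacts [hγ.1, norm_rollout_mixture_sub_rollout_le hγ hπ hπhat hβ ha ha' h0 hε hclose t
            ht.le]
      _ = β * (γ * ε * L / (1 - γ)) := by ring
  linarith

theorem averageLoss_rollout_mixture_sub_le (hγ : γ ∈ Set.Ico (0 : ℝ) 1)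
    (hπ : ActionLipschitz γ π) (hπhat : ActionLipschitz γ πhat)
    (hconv : ConvexOn ℝ Set.univ ℓ) (hL : 0 ≤ L) (hlip : ∀ u v : E, |ℓ u - ℓ v| ≤ L * ‖u - v‖)
    (hβ : β ∈ Set.Icc (0 : ℝ) 1) (hT : 1 ≤ T)
    (ha : IsRollout π x a) (ha' : IsRollout (β • πhat + (1 - β) • π) x a') (h0 : a' 0 = a 0)
    (hε : 0 ≤ ε)
    (hclose : ∀ t < T, ‖πhat (x (t + 1), a t) - π (x (t + 1), a t)‖ ≤ ε) :
    averageLoss ℓ T a' - averageLoss ℓ T a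
      ≤ -(β * (averageLoss ℓ T a - averageLoss ℓ T (fun t ↦ πhat (x t, a (t - 1)))
        - γ * ε * L / (1 - γ))) := by
  have hmean : averageLoss ℓ T a' ≤ β * averageLoss ℓ T (fun t ↦ πhat (x t, a (t - 1)))
      + (1 - β) * averageLoss ℓ T a + β * (γ * ε * L / (1 - γ)) := by
    refine averageLoss_le_of_forall_le_combination hT fun t ht ↦ ?_
    obtain ⟨h1t, htT⟩ := mem_Icc.1 ht
    obtain ⟨s, rfl⟩ := Nat.exists_eq_add_of_le' h1t
    exact loss_rollout_mixture_le hγ hπ hπhat hconv hL hlip hβ ha ha' h0 hε hclose htT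
  linarith

theorem monotonic_improvement_general (hγ : γ ∈ Set.Ico (0 : ℝ) 1)
    (hπ : ActionLipschitz γ π) (hπhat : ActionLipschitz γ πhat)
    (hconv : ConvexOn ℝ Set.univ ℓ) (hL : 0 ≤ L) (hlip : ∀ u v : E, |ℓ u - ℓ v| ≤ L * ‖u - v‖)
    (hT : 1 ≤ T) (ha : IsRollout π x a) (hε : 0 ≤ ε)
    (hclose : ∀ t < T, ‖πhat (x (t + 1), a t) - π (x (t + 1), a t)‖ ≤ ε) {Δ δ : ℝ}
    (hΔ : Δ = averageLoss ℓ T a - averageLoss ℓ T (fun t ↦ πhat (x t, a (t - 1))))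
    (hδ : δ = γ * ε * L / (1 - γ)) (hΔδ : δ < Δ) (hβ : β = (Δ - δ) / (2 * Δ))
    (ha' : IsRollout (β • πhat + (1 - β) • π) x a') (h0 : a' 0 = a 0) :
    averageLoss ℓ T a' - averageLoss ℓ T a ≤ -((Δ - δ) ^ 2 / (2 * Δ)) := by
  have hδ0 : 0 ≤ δ := hδ ▸ stability_penalty_nonneg hγ hε hL
  have hβmem : β ∈ Set.Icc (0 : ℝ) 1 :=
    hβ ▸ ⟨div_nonneg (by linarith) (by linarith), div_le_one_of_le₀ (by linarith) (by linarith)⟩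
  calc averageLoss ℓ T a' - averageLoss ℓ T a
      ≤ -(β * (Δ - δ)) := by
        rw [hΔ, hδ]
        exact averageLoss_rollout_mixture_sub_le hγ hπ hπhat hconv hL hlip hβmem hT ha ha' h0 hε
          hclose
    _ = -((Δ - δ) ^ 2 / (2 * Δ)) := by rw [hβ]; ring

end Policies

/-- Corollary 2 of the paper (monotonic improvement): under the hypotheses of the
policy improvement theorem, with `Δ = ℓ_π(π) − ℓ_π(π̂)` and `δ = γεL/(1−γ)`, if
`Δ > δ` and the step size is chosen as `β = (Δ − δ)/(2Δ)`, then the interpolated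
policy `π' = β·π̂ + (1−β)·π` strictly improves:
`ℓ_{π'}(π') − ℓ_π(π) ≤ −(Δ − δ)²/(2(Δ + δ))`. -/
theorem monotonic_improvement {X : Type*} {k : ℕ}
    (π πhat : X × EuclideanSpace ℝ (Fin k) → EuclideanSpace ℝ (Fin k))
    (γ : ℝ) (hγ : γ ∈ Set.Ioo (0 : ℝ) 1)
    (hπ : ∀ (x : X) (a a' : EuclideanSpace ℝ (Fin k)),
      ‖π (x, a) - π (x, a')‖ ≤ γ * ‖a - a'‖)
    (hπhat : ∀ (x : X) (a a' : EuclideanSpace ℝ (Fin k)),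
      ‖πhat (x, a) - πhat (x, a')‖ ≤ γ * ‖a - a'‖)
    (ℓ : EuclideanSpace ℝ (Fin k) → ℝ)
    (hconv : ConvexOn ℝ Set.univ ℓ)
    (L : ℝ) (hL0 : 0 ≤ L)
    (hlip : ∀ u v : EuclideanSpace ℝ (Fin k), |ℓ u - ℓ v| ≤ L * ‖u - v‖)
    (T : ℕ) (hT : 1 ≤ T) (x : ℕ → X) (a₀ : EuclideanSpace ℝ (Fin k))
    (a : ℕ → EuclideanSpace ℝ (Fin k)) (ha0 : a 0 = a₀)
    (ha : ∀ t : ℕ, a (t + 1) = π (x (t + 1), a t))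
    (ε : ℝ) (hε : 0 ≤ ε)
    (hclose : ∀ t : ℕ, 1 ≤ t → t ≤ T →
      ‖πhat (x t, a (t - 1)) - π (x t, a (t - 1))‖ ≤ ε)
    (Δ δ : ℝ)
    (hΔ : Δ = (1 / T : ℝ) * ∑ t ∈ Finset.Icc 1 T, ℓ (a t)
      - (1 / T : ℝ) * ∑ t ∈ Finset.Icc 1 T, ℓ (πhat (x t, a (t - 1))))
    (hδ : δ = γ * ε * L / (1 - γ))
    (hΔδ : δ < Δ)
    (β : ℝ) (hβ : β = (Δ - δ) / (2 * Δ))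
    (π' : X × EuclideanSpace ℝ (Fin k) → EuclideanSpace ℝ (Fin k))
    (hπ' : ∀ (x : X) (a : EuclideanSpace ℝ (Fin k)),
      π' (x, a) = β • πhat (x, a) + (1 - β) • π (x, a))
    (a' : ℕ → EuclideanSpace ℝ (Fin k)) (ha'0 : a' 0 = a₀)
    (ha' : ∀ t : ℕ, a' (t + 1) = π' (x (t + 1), a' t)) :
    (1 / T : ℝ) * ∑ t ∈ Finset.Icc 1 T, ℓ (a' t)
      - (1 / T : ℝ) * ∑ t ∈ Finset.Icc 1 T, ℓ (a t)
    ≤ -((Δ - δ) ^ 2 / (2 * (Δ + δ))) := by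
  have hγ' : γ ∈ Set.Ico (0 : ℝ) 1 := Set.Ioo_subset_Ico_self hγ
  have hδ0 : 0 ≤ δ := hδ ▸ stability_penalty_nonneg hγ' hε hL0
  exact (monotonic_improvement_general hγ' hπ hπhat hconv hL0 hlip hT ha hε
    (fun t ht ↦ hclose (t + 1) (Nat.le_add_left 1 t) ht) hΔ hδ hΔδ hβ
    (fun t ↦ (ha' t).trans (hπ' _ _)) (ha'0.trans ha0.symm)).trans
    (neg_le_neg (div_le_div_of_nonneg_left (sq_nonneg _) (by linarith) (by linarith)))
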